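/- Assume n ≥ 1 and let λ ∈ K. Let M be a torsion-free λ-Euler graded D-module with M_0 = 0. Then M_{−(b_0 d_0 + b_1 d_1 + ⋯ + b_n d_n)} = 0 for all natural numbers b_0, …, b_n; that is, M_{−s} = 0 for every s ∈ 𝒜. -/

import Mathlib

/-!
Context: `K` is a field of characteristic zero, `n ≥ 0`, and `d 0, …, d n` are
positive integers.  `A = K[x_0, …, x_n]` is the polynomial ring, graded with
`x i` of weighted degree `d i`.  Inside `End_K(A)` we have the multiplication
operators `x i`, the partial derivatives `∂ i`, the Weyl algebra `D` generated
by them, and the Euler field `E = Σ_i d_i x_i ∂_i`.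
-/

open MvPolynomial Finset

set_option synthInstance.maxHeartbeats 1000000
set_option maxHeartbeats 2000000

noncomputable section

variable (K : Type) [Field K] [CharZero K] (n : ℕ)

/-- The polynomial ring `A = K[x_0, …, x_n]`. -/
abbrev Amb := MvPolynomial (Fin (n+1)) K

/-- The operator of multiplication by `x_i` on `A`. -/
def xOp (i : Fin (n+1)) : Module.End K (Amb K n) := LinearMap.mulLeft K (X i)

/-- The partial derivative `∂/∂x_i` on `A`. -/
def dOp (i : Fin (n+1)) : Module.End K (Amb K n) := (pderiv i).toLinearMap

/-- The Weyl algebra `D`: the `K`-subalgebra of `End_K(A)` generated by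
`x_0, …, x_n, ∂_0, …, ∂_n`. -/
def Weyl : Subalgebra K (Module.End K (Amb K n)) :=
  Algebra.adjoin K (Set.range (xOp K n) ∪ Set.range (dOp K n))

variable (d : Fin (n+1) → ℕ)

/-- The Euler field `E = Σ_i d_i x_i ∂_i`, as an endomorphism of `A`. -/
def euler : Module.End K (Amb K n) := ∑ i, (d i : K) • (xOp K n i * dOp K n i)

lemma xOp_mem (i : Fin (n+1)) : xOp K n i ∈ Weyl K n :=
  Algebra.subset_adjoin (Or.inl ⟨i, rfl⟩)

lemma dOp_mem (i : Fin (n+1)) : dOp K n i ∈ Weyl K n :=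
  Algebra.subset_adjoin (Or.inr ⟨i, rfl⟩)

lemma euler_mem : euler K n d ∈ Weyl K n :=
  Subalgebra.sum_mem _ fun i _ => Subalgebra.smul_mem _
    (Subalgebra.mul_mem _ (xOp_mem K n i) (dOp_mem K n i)) _

/-- `x_i` as an element of the Weyl algebra. -/
def xElt (i : Fin (n+1)) : Weyl K n := ⟨xOp K n i, xOp_mem K n i⟩

/-- `∂_i` as an element of the Weyl algebra. -/
def dElt (i : Fin (n+1)) : Weyl K n := ⟨dOp K n i, dOp_mem K n i⟩

/-- The Euler field as an element of the Weyl algebra. -/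
def eulerElt : Weyl K n := ⟨euler K n d, euler_mem K n d⟩

/-!
Suppose `M_{k + d_i} = 0` and let `m ∈ M_k`.  Then `x_i m = 0`, so `v = x_j ^ d_i m` is killed by
`x_i` for every `j`.  On the kernel of `x_i` all powers of `∂_i` are injective, because
`[∂_i ^ (e + 1), x_i] = (e + 1) ∂_i ^ e`.  But `∂_i ^ (d_j - 1) v` has degree
`k + d_i d_j - d_i (d_j - 1) = k + d_i`, hence vanishes, and so does `v`.  Thus `m = 0` by
torsion-freeness.  Descending from `M_0 = 0` one weight at a time reaches every `M_{-s}` with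
`s ∈ 𝒜`.
-/

lemma pow_succ_mul_of_mul_eq_mul_add_one {A : Type*} [Semiring A] {x y : A}
    (hyx : y * x = x * y + 1) (e : ℕ) :
    y ^ (e + 1) * x = x * y ^ (e + 1) + (e + 1) • y ^ e := by
  induction e with
  | zero => simpa using hyx
  | succ e ih =>
    calc y ^ (e + 1 + 1) * x
        = y * (y ^ (e + 1) * x) := by rw [pow_succ', mul_assoc]
      _ = y * x * y ^ (e + 1) + (e + 1) • y ^ (e + 1) := by
        rw [ih, mul_add, mul_smul_comm, ← pow_succ', mul_assoc]
      _ = x * y ^ (e + 1 + 1) + (e + 1 + 1) • y ^ (e + 1) := by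
        rw [hyx, add_mul, one_mul, mul_assoc, ← pow_succ', add_assoc, ← succ_nsmul']

section Operators

variable {R M : Type*} [Semiring R] [AddCommMonoid M] [Module R M]

lemma disjoint_ker_ker_pow_of_mul_eq_mul_add_one [IsAddTorsionFree M] {x y : Module.End R M}
    (hyx : y * x = x * y + 1) (e : ℕ) : Disjoint (LinearMap.ker x) (LinearMap.ker (y ^ e)) := by
  refine Submodule.disjoint_def.mpr fun v hxv hyv => ?_
  rw [LinearMap.mem_ker] at hxv hyv
  induction e with
  | zero => simpa using hyv
  | succ e ih =>
    have hsmul : (e + 1) • (y ^ e) v = 0 := by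
      have hv := LinearMap.congr_fun (pow_succ_mul_of_mul_eq_mul_add_one hyx e) v
      rwa [Module.End.mul_apply, LinearMap.add_apply, Module.End.mul_apply, hxv, hyv, map_zero,
        map_zero, zero_add, LinearMap.smul_apply, eq_comm] at hv
    exact ih ((nsmul_eq_zero_iff_right e.succ_ne_zero).mp hsmul)

lemma pow_apply_mem_of_apply_mem_add {G : Type*} [AddMonoid G] {Mgr : G → Submodule R M}
    {f : Module.End R M} {a : G} (hf : ∀ k, ∀ m ∈ Mgr k, f m ∈ Mgr (k + a)) (c : ℕ)
    {k : G} {m : M} (hm : m ∈ Mgr k) : (f ^ c) m ∈ Mgr (k + c • a) := by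
  induction c with
  | zero => simpa using hm
  | succ c ih =>
    rw [pow_succ', Module.End.mul_apply, succ_nsmul, ← add_assoc]
    exact hf _ _ ih

variable [IsAddTorsionFree M] {Mgr : ℤ → Submodule R M}

lemma pow_apply_eq_zero_of_commute_of_add_eq_bot {x y z : Module.End R M} {a b : ℕ} (hb : 0 < b)
    (hyx : y * x = x * y + 1) (hxz : Commute x z)
    (hgy : ∀ k, ∀ m ∈ Mgr k, y m ∈ Mgr (k - a)) (hgz : ∀ k, ∀ m ∈ Mgr k, z m ∈ Mgr (k + b))
    {k : ℤ} (h : Mgr (k + a) = ⊥) {m : M} (hm : m ∈ Mgr k) (hxm : x m = 0) :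
    (z ^ a) m = 0 := by
  have hxv : x ((z ^ a) m) = 0 := by
    rw [← Module.End.mul_apply, (hxz.pow_right a).eq, Module.End.mul_apply, hxm, map_zero]
  have hyv : (y ^ (b - 1)) ((z ^ a) m) ∈ Mgr (k + a • (b : ℤ) + (b - 1) • -(a : ℤ)) :=
    pow_apply_mem_of_apply_mem_add (by simpa only [sub_eq_add_neg] using hgy) _
      (pow_apply_mem_of_apply_mem_add hgz _ hm)
  have hdeg : k + a • (b : ℤ) + (b - 1) • -(a : ℤ) = k + a := by
    simp only [nsmul_eq_mul, Nat.cast_pred hb]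
    ring
  rw [hdeg, h, Submodule.mem_bot] at hyv
  exact Submodule.disjoint_def.mp
    (disjoint_ker_ker_pow_of_mul_eq_mul_add_one hyx (b - 1)) _ hxv hyv

theorem stmt14_general {ι : Type*} {w : ι → ℕ} {x y : ι → Module.End R M} (hw : ∀ i, 0 < w i)
    (hcomm : ∀ i j, Commute (x i) (x j)) (hyx : ∀ i, y i * x i = x i * y i + 1)
    (hgx : ∀ i k, ∀ m ∈ Mgr k, x i m ∈ Mgr (k + w i))
    (hgy : ∀ i k, ∀ m ∈ Mgr k, y i m ∈ Mgr (k - w i))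
    (htf : ∀ m, (∃ c : ℕ, ∀ i, (x i ^ c) m = 0) → m = 0)
    {s : ℕ} (hs : s ∈ AddSubmonoid.closure (Set.range w)) {k : ℤ} (h : Mgr (k + s) = ⊥) :
    Mgr k = ⊥ := by
  induction hs using AddSubmonoid.closure_induction generalizing k with
  | mem s hs =>
    obtain ⟨i, rfl⟩ := hs
    refine (Submodule.eq_bot_iff _).mpr fun m hm => htf m ⟨w i, fun j => ?_⟩
    have hxm : x i m = 0 := (Submodule.mem_bot R).mp (h ▸ hgx i k m hm)
    exact pow_apply_eq_zero_of_commute_of_add_eq_bot (hw j) (hyx i) (hcomm i j) (hgy i) (hgx j)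
      h hm hxm
  | zero => simpa using h
  | add a b _ _ iha ihb => exact iha (ihb (by rwa [add_assoc, ← Nat.cast_add]))

end Operators

lemma xElt_commute (i j : Fin (n + 1)) : Commute (xElt K n i) (xElt K n j) :=
  Subtype.ext <| LinearMap.ext fun p => mul_left_comm (X i) (X j) p

lemma dElt_mul_xElt (i : Fin (n + 1)) :
    dElt K n i * xElt K n i = xElt K n i * dElt K n i + 1 := by
  refine Subtype.ext <| LinearMap.ext fun p => ?_
  have hleibniz : pderiv i (X i * p) = X i * pderiv i p + p := by
    rw [pderiv_mul, pderiv_X_self, one_mul]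
    exact add_comm _ _
  exact hleibniz

/-- Assume `n ≥ 1` and let `λ ∈ K`.  Let `M` be a torsion-free `λ`-Euler
graded `D`-module with `M_0 = 0`.  Then `M_{−(b_0 d_0 + ⋯ + b_n d_n)} = 0` for all
natural numbers `b_0, …, b_n`; that is, `M_{−s} = 0` for every `s ∈ 𝒜`. -/
theorem stmt14 (hn : 1 ≤ n) (hd : ∀ i, 0 < d i) (t : K)
    {M : Type} [AddCommGroup M] [Module K M]
    (ρ : Weyl K n →ₐ[K] Module.End K M)
    (Mgr : ℤ → Submodule K M)
    (hdirect : DirectSum.IsInternal Mgr)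
    (hgx : ∀ (i : Fin (n+1)) (k : ℤ), ∀ m ∈ Mgr k, ρ (xElt K n i) m ∈ Mgr (k + d i))
    (hgd : ∀ (i : Fin (n+1)) (k : ℤ), ∀ m ∈ Mgr k, ρ (dElt K n i) m ∈ Mgr (k - d i))
    (hgE : ∀ (k : ℤ), ∀ m ∈ Mgr k, ρ (eulerElt K n d) m = (t + (k : K)) • m)
    (htf : ∀ m : M, (∃ c : ℕ, ∀ i : Fin (n+1), (ρ (xElt K n i) ^ c) m = 0) → m = 0)
    (h0 : Mgr 0 = ⊥) :
    ∀ b : Fin (n+1) → ℕ, Mgr (-(∑ i, (b i : ℤ) * (d i : ℤ))) = ⊥ := by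
  intro b
  have : IsAddTorsionFree M := .of_isTorsionFree K M
  exact stmt14_general hd (fun i j => (xElt_commute K n i j).map ρ)
    (fun i => by simpa only [map_mul, map_add, map_one] using congrArg ρ (dElt_mul_xElt K n i))
    hgx hgd htf (AddSubmonoid.mem_closure_range_iff_of_fintype.mpr ⟨b, rfl⟩) (by simpa using h0)

end
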